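/- Define on V = H²₀(Ω), Ω ⊂ ℝ² bounded open, the trilinear form Γ(v,w,φ) = ∫_Ω Δv (curl w · ∇φ) dx, where curl w = (∂w/∂y, −∂w/∂x). Then for all v, w, φ ∈ V, |Γ(v,w,φ)| ≤ (|Ω|^{1/2}/π²) ‖D²v‖_{L²} ‖D²w‖_{L²} ‖D²φ‖_{L²}. -/

import Mathlib

open MeasureTheory

noncomputable section

/-- Partial derivative `∂f/∂xᵢ`. -/
def pd (f : EuclideanSpace ℝ (Fin 2) → ℝ) (i : Fin 2) (x : EuclideanSpace ℝ (Fin 2)) : ℝ :=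
  fderiv ℝ f x (EuclideanSpace.single i 1)

/-- Second partial derivative `∂²f/∂xᵢ∂xⱼ`. -/
def pd2 (f : EuclideanSpace ℝ (Fin 2) → ℝ) (i j : Fin 2) (x : EuclideanSpace ℝ (Fin 2)) : ℝ :=
  fderiv ℝ (fun y => pd f j y) x (EuclideanSpace.single i 1)

/-- Laplacian `Δf`. -/
def lap (f : EuclideanSpace ℝ (Fin 2) → ℝ) (x : EuclideanSpace ℝ (Fin 2)) : ℝ :=
  pd2 f 0 0 x + pd2 f 1 1 x

/-- `|D²f(x)|²` (squared Frobenius norm of the Hessian). -/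
def hess2 (f : EuclideanSpace ℝ (Fin 2) → ℝ) (x : EuclideanSpace ℝ (Fin 2)) : ℝ :=
  ∑ i, ∑ j, (pd2 f i j x) ^ 2

/-- Trilinear form `Γ(v,w,φ) = ∫_Ω Δv (curl w · ∇φ)` with
`curl w = (∂w/∂y, −∂w/∂x)`, so `curl w · ∇φ = ∂w/∂y ∂φ/∂x − ∂w/∂x ∂φ/∂y`. -/
def Gam (Ω : Set (EuclideanSpace ℝ (Fin 2))) (v w φ : EuclideanSpace ℝ (Fin 2) → ℝ) : ℝ :=
  ∫ x in Ω, lap v x * (pd w 1 x * pd φ 0 x - pd w 0 x * pd φ 1 x)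

/-- A smooth function compactly supported in `Ω`, a proxy for membership in `H²₀(Ω)`. -/
def IsTest (Ω : Set (EuclideanSpace ℝ (Fin 2))) (φ : EuclideanSpace ℝ (Fin 2) → ℝ) : Prop :=
  ContDiff ℝ (⊤ : ℕ∞) φ ∧ HasCompactSupport φ ∧ tsupport φ ⊆ Ω


/-- The plane. -/
abbrev E2 := EuclideanSpace ℝ (Fin 2)

/-- Quarter turn. -/
def rotE : E2 ≃ₗᵢ[ℝ] E2 where
  toFun x := !₂[-x 1, x 0]
  invFun x := !₂[x 1, -x 0]
  map_add' x y := by ext i; fin_cases i <;> simp; ring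
  map_smul' c x := by ext i; fin_cases i <;> simp
  left_inv x := by ext i; fin_cases i <;> simp
  right_inv x := by ext i; fin_cases i <;> simp
  norm_map' x := by
    simp [EuclideanSpace.norm_eq, Fin.sum_univ_two, add_comm]

lemma rotE_zero (x : E2) : rotE x 0 = -x 1 := rfl
lemma rotE_one (x : E2) : rotE x 1 = x 0 := rfl

lemma normsq_E (x : E2) : ‖x‖ ^ 2 = x 0 ^ 2 + x 1 ^ 2 := by
  rw [EuclideanSpace.norm_sq_eq]; simp [Fin.sum_univ_two]

lemma integral_rotE (g : E2 → ℝ) : ∫ x, g (rotE x) = ∫ x, g x :=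
  (rotE.measurePreserving).integral_comp rotE.toMeasurableEquiv.measurableEmbedding g

lemma radial_integral (f : ℝ → ℝ) :
    ∫ x : E2, f ‖x‖ = 2 * Real.pi * ∫ y in Set.Ioi (0 : ℝ), y * f y := by
  have h := integral_fun_norm_addHaar (volume : Measure E2) f
  have hv : (volume : Measure E2).real (Metric.ball 0 1) = Real.pi := by
    rw [Measure.real, EuclideanSpace.volume_ball_fin_two]
    simp [Real.pi_pos.le]
  rw [h, hv]
  simp
  ring

lemma radial_integrable (f : ℝ → ℝ) :
    Integrable (fun x : E2 => f ‖x‖) ↔ IntegrableOn (fun y => y * f y) (Set.Ioi (0 : ℝ)) := by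
  have h := integrable_fun_norm_addHaar (volume : Measure E2) (f := f)
  simpa using h

lemma quart_aux (M : ℝ) (hM : 0 < M) :
    IntegrableOn (fun y : ℝ => y * (y ^ 2 / (y ^ 2 + M) ^ 4)) (Set.Ioi 0) ∧
    ∫ y in Set.Ioi (0 : ℝ), y * (y ^ 2 / (y ^ 2 + M) ^ 4) = 1 / (12 * M ^ 2) := by
  let G : ℝ → ℝ := fun y => -1 / (4 * (y ^ 2 + M) ^ 2) + M / (6 * (y ^ 2 + M) ^ 3)
  have hd : ∀ x ∈ Set.Ici (0 : ℝ), HasDerivAt G (x * (x ^ 2 / (x ^ 2 + M) ^ 4)) x := by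
    intro x _
    have hp : x ^ 2 + M ≠ 0 := by positivity
    have h1 : HasDerivAt (fun y : ℝ => y ^ 2 + M) (2 * x) x := by
      simpa using (hasDerivAt_pow 2 x).add_const M
    have h2 := (((h1.pow 2).const_mul 4).inv (by simpa using hp)).const_mul (-1)
    have h3 := (((h1.pow 3).const_mul 6).inv (by simpa using hp)).const_mul M
    convert! h2.add h3 using 1
    simp
    field_simp
    ring
  have hlim : Filter.Tendsto G Filter.atTop (nhds 0) := by
    have h0 : Filter.Tendsto (fun y : ℝ => y ^ 2 + M) Filter.atTop Filter.atTop :=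
      Filter.tendsto_atTop_add_const_right _ _ (Filter.tendsto_pow_atTop (by norm_num))
    have h1 : Filter.Tendsto (fun y : ℝ => (y ^ 2 + M)⁻¹) Filter.atTop (nhds 0) :=
      tendsto_inv_atTop_zero.comp h0
    have h2 := ((h1.pow 2).const_mul (-1/4)).add ((h1.pow 3).const_mul (M/6))
    simp only [ne_eq, OfNat.ofNat_ne_zero, not_false_eq_true, zero_pow, mul_zero, add_zero] at h2
    refine h2.congr fun y => ?_
    have hp : y ^ 2 + M ≠ 0 := by positivity
    simp only [G]
    field_simp
  have hpos : ∀ x ∈ Set.Ioi (0 : ℝ), 0 ≤ x * (x ^ 2 / (x ^ 2 + M) ^ 4) := by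
    intro x hx
    have : (0:ℝ) < x := hx
    positivity
  refine ⟨integrableOn_Ioi_deriv_of_nonneg' hd hpos hlim, ?_⟩
  rw [integral_Ioi_of_hasDerivAt_of_nonneg' hd hpos hlim]
  simp only [G]
  field_simp
  ring

lemma quart_integrable (M : ℝ) (hM : 0 < M) :
    Integrable (fun x : E2 => ‖x‖ ^ 2 / (‖x‖ ^ 2 + M) ^ 4) :=
  (radial_integrable (fun y => y ^ 2 / (y ^ 2 + M) ^ 4)).2 (quart_aux M hM).1

lemma quart_integral (M : ℝ) (hM : 0 < M) :
    ∫ x : E2, ‖x‖ ^ 2 / (‖x‖ ^ 2 + M) ^ 4 = Real.pi / (6 * M ^ 2) := by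
  rw [radial_integral (fun y => y ^ 2 / (y ^ 2 + M) ^ 4), (quart_aux M hM).2]
  field_simp
  ring

lemma tent_aux (ρ : ℝ) (hρ : 0 < ρ) :
    IntegrableOn (fun y : ℝ => y * max 0 (1 - y ^ 2 / ρ ^ 2)) (Set.Ioi 0) ∧
    ∫ y in Set.Ioi (0 : ℝ), y * max 0 (1 - y ^ 2 / ρ ^ 2) = ρ ^ 2 / 4 := by
  have hz : ∀ y ∈ Set.Ioi ρ, y * max 0 (1 - y ^ 2 / ρ ^ 2) = 0 := by
    intro y hy
    have hy : ρ < y := hy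
    have : 1 - y ^ 2 / ρ ^ 2 ≤ 0 := by
      rw [sub_nonpos, le_div_iff₀ (by positivity)]; nlinarith
    rw [max_eq_left this, mul_zero]
  have hc : Continuous (fun y : ℝ => y * max 0 (1 - y ^ 2 / ρ ^ 2)) := by fun_prop
  have hi1 : IntegrableOn (fun y : ℝ => y * max 0 (1 - y ^ 2 / ρ ^ 2)) (Set.Ioc 0 ρ) :=
    (hc.integrableOn_Icc).mono_set Set.Ioc_subset_Icc_self
  have hi2 : IntegrableOn (fun y : ℝ => y * max 0 (1 - y ^ 2 / ρ ^ 2)) (Set.Ioi ρ) :=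
    (integrableOn_zero).congr_fun (fun y hy => (hz y hy).symm) measurableSet_Ioi
  rw [← Set.Ioc_union_Ioi_eq_Ioi hρ.le]
  refine ⟨hi1.union hi2, ?_⟩
  rw [setIntegral_union (Set.Ioc_disjoint_Ioi le_rfl) measurableSet_Ioi hi1 hi2,
    setIntegral_congr_fun measurableSet_Ioi hz]
  have he : ∀ y ∈ Set.Ioc 0 ρ, y * max 0 (1 - y ^ 2 / ρ ^ 2) = y - y ^ 3 / ρ ^ 2 := by
    intro y hy
    have h1 := hy.1
    have h2 := hy.2
    have : 0 ≤ 1 - y ^ 2 / ρ ^ 2 := by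
      rw [sub_nonneg, div_le_iff₀ (by positivity)]; nlinarith
    rw [max_eq_right this]; ring
  rw [setIntegral_congr_fun measurableSet_Ioc he, ← intervalIntegral.integral_of_le hρ.le,
    intervalIntegral.integral_sub (by simp) (by apply Continuous.intervalIntegrable; fun_prop)]
  simp
  field_simp
  ring

lemma tent_integrable (ρ : ℝ) (hρ : 0 < ρ) :
    Integrable (fun x : E2 => max 0 (1 - ‖x‖ ^ 2 / ρ ^ 2)) :=
  (radial_integrable (fun y => max 0 (1 - y ^ 2 / ρ ^ 2))).2 (tent_aux ρ hρ).1

lemma tent_integral (ρ : ℝ) (hρ : 0 < ρ) :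
    ∫ x : E2, max 0 (1 - ‖x‖ ^ 2 / ρ ^ 2) = Real.pi * ρ ^ 2 / 2 := by
  rw [radial_integral (fun y => max 0 (1 - y ^ 2 / ρ ^ 2)), (tent_aux ρ hρ).2]
  ring

/-- Bathtub estimate. -/
lemma bathtub (g : E2 → ℝ) (C ρ : ℝ) (hρ : 0 < ρ) (hg0 : ∀ x, 0 ≤ g x)
    (hg : Integrable g) (hg2 : Integrable (fun x => ‖x‖ ^ 2 * g x))
    (hC : ∀ x, g x + g (rotE x) ≤ 2 * C) :
    ∫ x, g x ≤ (∫ x, ‖x‖ ^ 2 * g x) / ρ ^ 2 + C * (Real.pi * ρ ^ 2 / 2) := by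
  let h : E2 → ℝ := fun x => max 0 (1 - ‖x‖ ^ 2 / ρ ^ 2)
  have hh0 : ∀ x, 0 ≤ h x := fun x => le_max_left _ _
  have hh1 : ∀ x, h x ≤ 1 := fun x => max_le (by norm_num) (by
    have : 0 ≤ ‖x‖ ^ 2 / ρ ^ 2 := by positivity
    linarith)
  have hhr : ∀ x, h (rotE x) = h x := fun x => by simp [h]
  have hhc : Continuous h := by fun_prop
  have hhg : Integrable (fun x => h x * g x) :=
    hg.bdd_mul (c := 1) hhc.aestronglyMeasurable
      (Filter.Eventually.of_forall fun x => by
        rw [Real.norm_eq_abs, abs_of_nonneg (hh0 x)]; exact hh1 x)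
  have hhgr : Integrable (fun x => h x * g (rotE x)) := by
    have := (rotE.measurePreserving).integrable_comp_of_integrable hhg
    refine this.congr (Filter.Eventually.of_forall fun x => ?_)
    simp [hhr]
  have e1 : ∫ x, h x * g (rotE x) = ∫ x, h x * g x := by
    rw [← integral_rotE (fun x => h x * g x)]
    simp only [hhr]
  have e2 : 2 * ∫ x, h x * g x ≤ 2 * C * (Real.pi * ρ ^ 2 / 2) := by
    rw [← tent_integral ρ hρ, two_mul]
    nth_rewrite 2 [← e1]
    rw [← integral_add hhg hhgr, ← integral_const_mul]
    refine integral_mono (hhg.add hhgr) ((tent_integrable ρ hρ).const_mul _) fun x => ?_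
    have := mul_le_mul_of_nonneg_left (hC x) (hh0 x)
    simp only [h] at this ⊢
    linarith
  have e3 : ∫ x, g x ≤ ∫ x, ((‖x‖ ^ 2 * g x) / ρ ^ 2 + h x * g x) := by
    refine integral_mono hg ((hg2.div_const _).add hhg) fun x => ?_
    have h1 : 1 - ‖x‖ ^ 2 / ρ ^ 2 ≤ h x := le_max_right _ _
    have := mul_le_mul_of_nonneg_right h1 (hg0 x)
    have e : (‖x‖ ^ 2 * g x) / ρ ^ 2 = ‖x‖ ^ 2 / ρ ^ 2 * g x := by ring
    simp only [e]
    linarith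
  rw [integral_add (hg2.div_const _) hhg, integral_div] at e3
  linarith

/-- Cross product (up to sign). -/
def cr (t ξ : E2) : ℝ := t 1 * ξ 0 - t 0 * ξ 1

lemma cr_rot_sq (s ξ : E2) : cr s ξ ^ 2 + cr (rotE s) ξ ^ 2 = ‖s‖ ^ 2 * ‖ξ‖ ^ 2 := by
  rw [normsq_E, normsq_E, cr, cr, rotE_zero, rotE_one]; ring

lemma cr_continuous (ξ : E2) : Continuous (fun s => cr s ξ) := by
  unfold cr; fun_prop

lemma crint_integrable (ξ : E2) (M : ℝ) (hM : 0 < M) :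
    Integrable (fun s : E2 => cr s ξ ^ 2 / (‖s‖ ^ 2 + M) ^ 4) := by
  refine ((quart_integrable M hM).const_mul (‖ξ‖ ^ 2)).mono' ?_ ?_
  · refine Continuous.aestronglyMeasurable ?_
    refine Continuous.div ((cr_continuous ξ).pow 2) (by fun_prop) fun x => by positivity
  · refine Filter.Eventually.of_forall fun s => ?_
    rw [Real.norm_eq_abs, abs_of_nonneg (by positivity), ← mul_div_assoc]
    have := cr_rot_sq s ξ
    gcongr
    nlinarith [sq_nonneg (cr (rotE s) ξ)]

lemma crint (ξ : E2) (M : ℝ) (hM : 0 < M) :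
    ∫ s : E2, cr s ξ ^ 2 / (‖s‖ ^ 2 + M) ^ 4 = ‖ξ‖ ^ 2 * Real.pi / (12 * M ^ 2) := by
  have hi := crint_integrable ξ M hM
  have hir : Integrable (fun s : E2 => cr (rotE s) ξ ^ 2 / (‖s‖ ^ 2 + M) ^ 4) := by
    have := (rotE.measurePreserving).integrable_comp_of_integrable hi
    refine this.congr (Filter.Eventually.of_forall fun x => ?_)
    simp
  have e1 : ∫ s : E2, cr (rotE s) ξ ^ 2 / (‖s‖ ^ 2 + M) ^ 4
      = ∫ s : E2, cr s ξ ^ 2 / (‖s‖ ^ 2 + M) ^ 4 := by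
    rw [← integral_rotE (fun s => cr s ξ ^ 2 / (‖s‖ ^ 2 + M) ^ 4)]
    simp
  have e2 : (∫ s : E2, cr s ξ ^ 2 / (‖s‖ ^ 2 + M) ^ 4)
      + ∫ s : E2, cr (rotE s) ξ ^ 2 / (‖s‖ ^ 2 + M) ^ 4 = ‖ξ‖ ^ 2 * (Real.pi / (6 * M ^ 2)) := by
    rw [← integral_add hi hir, ← quart_integral M hM, ← integral_const_mul]
    congr 1
    ext s
    rw [← add_div, cr_rot_sq]
    ring
  rw [e1] at e2
  have : ‖ξ‖ ^ 2 * Real.pi / (12 * M ^ 2) = (‖ξ‖ ^ 2 * (Real.pi / (6 * M ^ 2))) / 2 := by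
    field_simp; ring
  linarith

lemma feyn (A B : ℝ) (hA : 0 < A) (hB : 0 < B) :
    ∫⁻ x in Set.Ioc (0 : ℝ) 1, ENNReal.ofReal (6 * x * (1 - x) / (A + x * (B - A)) ^ 4)
      = ENNReal.ofReal (1 / (A ^ 2 * B ^ 2)) := by
  have hL : ∀ x ∈ Set.Icc (0 : ℝ) 1, 0 < A + x * (B - A) := by
    intro x hx
    have h0 := hx.1
    have h1 := hx.2
    have : A + x * (B - A) = A * (1 - x) + x * B := by ring
    rw [this]
    rcases h0.eq_or_lt with h | h
    · subst h; simpa using hA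
    · have := mul_pos h hB
      have : 0 ≤ A * (1 - x) := mul_nonneg hA.le (by linarith)
      linarith
  have hcont : ContinuousOn (fun x : ℝ => 6 * x * (1 - x) / (A + x * (B - A)) ^ 4)
      (Set.Icc 0 1) := by
    refine ContinuousOn.div (by fun_prop) (by fun_prop) fun x hx => ?_
    exact (pow_pos (hL x hx) 4).ne'
  have hint : IntegrableOn (fun x : ℝ => 6 * x * (1 - x) / (A + x * (B - A)) ^ 4)
      (Set.Ioc 0 1) :=
    (hcont.integrableOn_Icc).mono_set Set.Ioc_subset_Icc_self
  rw [← ofReal_integral_eq_lintegral_ofReal hint]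
  · congr 1
    rw [← intervalIntegral.integral_of_le zero_le_one]
    have hd : ∀ x ∈ Set.uIcc (0 : ℝ) 1, HasDerivAt
        (fun x : ℝ => (3 * (x / (A + x * (B - A))) ^ 2 - 2 * B * (x / (A + x * (B - A))) ^ 3) / A ^ 2)
        (6 * x * (1 - x) / (A + x * (B - A)) ^ 4) x := by
      intro x hx
      rw [Set.uIcc_of_le zero_le_one] at hx
      have hl := (hL x hx).ne'
      have h1 : HasDerivAt (fun x : ℝ => A + x * (B - A)) (B - A) x := by
        simpa using ((hasDerivAt_id x).mul_const (B - A)).const_add A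
      have h2 : HasDerivAt (fun x : ℝ => x / (A + x * (B - A))) (A / (A + x * (B - A)) ^ 2) x := by
        convert! (hasDerivAt_id x).div h1 hl using 1
        simp
      have h3 := (((h2.pow 2).const_mul 3).sub ((h2.pow 3).const_mul (2 * B))).div_const (A ^ 2)
      convert! h3 using 1
      simp
      field_simp
      ring
    rw [intervalIntegral.integral_eq_sub_of_hasDerivAt hd]
    · have : A + 1 * (B - A) = B := by ring
      simp only [this]
      field_simp
      norm_num
    · exact (intervalIntegrable_iff_integrableOn_Ioc_of_le zero_le_one).2 hint
  · refine (ae_restrict_iff' measurableSet_Ioc).2 (Filter.Eventually.of_forall fun x hx => ?_)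
    have h0 := hx.1
    have h1 : 0 ≤ 1 - x := by linarith [hx.2]
    have := hL x ⟨hx.1.le, hx.2⟩
    simp only [Pi.zero_apply]
    positivity

lemma slice_bound (q : ℝ) (hq : 0 < q) (ξ : E2) (x : ℝ) (hx : x ∈ Set.Ioc (0 : ℝ) 1) :
    ∫⁻ t : E2, ENNReal.ofReal (cr t ξ ^ 2 * (6 * x * (1 - x) /
      ((‖t‖ ^ 2 + q) + x * ((‖ξ - t‖ ^ 2 + q) - (‖t‖ ^ 2 + q))) ^ 4))
      ≤ ENNReal.ofReal (Real.pi / (8 * q)) := by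
  have h0 := hx.1
  have h1 : 0 ≤ 1 - x := by linarith [hx.2]
  set M := x * (1 - x) * ‖ξ‖ ^ 2 + q with hMdef
  have hM : 0 < M := by positivity
  have e : ∀ t : E2, cr t ξ ^ 2 * (6 * x * (1 - x) /
      ((‖t‖ ^ 2 + q) + x * ((‖ξ - t‖ ^ 2 + q) - (‖t‖ ^ 2 + q))) ^ 4)
      = (6 * x * (1 - x)) * (cr (t - x • ξ) ξ ^ 2 / (‖t - x • ξ‖ ^ 2 + M) ^ 4) := by
    intro t
    have a1 : cr (t - x • ξ) ξ = cr t ξ := by simp [cr]; ring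
    have a2 : (‖t‖ ^ 2 + q) + x * ((‖ξ - t‖ ^ 2 + q) - (‖t‖ ^ 2 + q))
        = ‖t - x • ξ‖ ^ 2 + M := by
      rw [hMdef]; simp only [normsq_E]; simp; ring
    rw [a1, a2]; ring
  simp_rw [e]
  rw [lintegral_sub_right_eq_self (fun t : E2 => ENNReal.ofReal
    ((6 * x * (1 - x)) * (cr t ξ ^ 2 / (‖t‖ ^ 2 + M) ^ 4))) (x • ξ)]
  rw [← ofReal_integral_eq_lintegral_ofReal ((crint_integrable ξ M hM).const_mul _)
    (Filter.Eventually.of_forall fun s => by simp only [Pi.zero_apply]; positivity)]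
  rw [integral_const_mul, crint ξ M hM]
  apply ENNReal.ofReal_le_ofReal
  have hp : 0 ≤ x * (1 - x) * ‖ξ‖ ^ 2 := by positivity
  have e3 : 6 * x * (1 - x) * (‖ξ‖ ^ 2 * Real.pi / (12 * M ^ 2))
      = Real.pi * (x * (1 - x) * ‖ξ‖ ^ 2) / (2 * M ^ 2) := by
    field_simp; ring
  rw [e3, div_le_div_iff₀ (by positivity) (by positivity), hMdef]
  have := mul_nonneg Real.pi_pos.le (sq_nonneg (x * (1 - x) * ‖ξ‖ ^ 2 - q))
  nlinarith

lemma kernel_bound (q : ℝ) (hq : 0 < q) (ξ : E2) :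
    ∫⁻ t : E2, ENNReal.ofReal (cr t ξ ^ 2 / ((‖t‖ ^ 2 + q) ^ 2 * (‖ξ - t‖ ^ 2 + q) ^ 2))
      ≤ ENNReal.ofReal (Real.pi / (8 * q)) := by
  have e : ∀ t : E2, ENNReal.ofReal (cr t ξ ^ 2 / ((‖t‖ ^ 2 + q) ^ 2 * (‖ξ - t‖ ^ 2 + q) ^ 2))
      = ∫⁻ x in Set.Ioc (0 : ℝ) 1, ENNReal.ofReal (cr t ξ ^ 2 * (6 * x * (1 - x) /
      ((‖t‖ ^ 2 + q) + x * ((‖ξ - t‖ ^ 2 + q) - (‖t‖ ^ 2 + q))) ^ 4)) := by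
    intro t
    simp_rw [ENNReal.ofReal_mul (sq_nonneg (cr t ξ))]
    rw [lintegral_const_mul' _ _ ENNReal.ofReal_ne_top,
      feyn (‖t‖ ^ 2 + q) (‖ξ - t‖ ^ 2 + q) (by positivity) (by positivity),
      ← ENNReal.ofReal_mul (sq_nonneg (cr t ξ)), mul_one_div]
  simp_rw [e]
  rw [lintegral_lintegral_swap]
  · calc _ ≤ ∫⁻ x in Set.Ioc (0 : ℝ) 1, ENNReal.ofReal (Real.pi / (8 * q)) :=
        setLIntegral_mono' measurableSet_Ioc fun x hx => slice_bound q hq ξ x hx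
      _ = _ := by simp
  · apply Measurable.aemeasurable
    have := (cr_continuous ξ).measurable
    apply Measurable.ennreal_ofReal
    unfold cr
    fun_prop

lemma lcs {α : Type*} [MeasurableSpace α] (μ : Measure α) (f g : α → ENNReal)
    (hf : AEMeasurable f μ) (hg : AEMeasurable g μ) :
    (∫⁻ x, f x * g x ∂μ) ^ 2 ≤ (∫⁻ x, f x ^ 2 ∂μ) * ∫⁻ x, g x ^ 2 ∂μ := by
  have h := ENNReal.lintegral_mul_le_Lp_mul_Lq μ Real.HolderConjugate.two_two hf hg
  calc (∫⁻ x, f x * g x ∂μ) ^ 2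
      ≤ ((∫⁻ a, f a ^ (2:ℝ) ∂μ) ^ (1 / (2:ℝ)) * (∫⁻ a, g a ^ (2:ℝ) ∂μ) ^ (1 / (2:ℝ))) ^ 2 := by
        gcongr
        exact h
    _ = _ := by
        rw [mul_pow, ← ENNReal.rpow_natCast, ← ENNReal.rpow_natCast, ← ENNReal.rpow_mul,
          ← ENNReal.rpow_mul]
        norm_num

lemma conv_bound (a b : E2 → ℝ) (ha : Continuous a) (hb : Continuous b)
    (ha0 : ∀ x, 0 ≤ a x) (hb0 : ∀ x, 0 ≤ b x) (H : E2 → ENNReal) (q : ℝ) (hq : 0 < q)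
    (hH : ∀ ξ, H ξ ≤ ∫⁻ t, ENNReal.ofReal (|cr t ξ| * (a t * b (ξ - t)))) :
    ∫⁻ ξ, H ξ ^ 2 ≤ ENNReal.ofReal (Real.pi / (8 * q)) *
      ((∫⁻ t, ENNReal.ofReal ((‖t‖ ^ 2 + q) ^ 2 * a t ^ 2)) *
        ∫⁻ t, ENNReal.ofReal ((‖t‖ ^ 2 + q) ^ 2 * b t ^ 2)) := by
  set α : E2 → ENNReal := fun t => ENNReal.ofReal ((‖t‖ ^ 2 + q) ^ 2 * a t ^ 2) with hα
  set β : E2 → ENNReal := fun t => ENNReal.ofReal ((‖t‖ ^ 2 + q) ^ 2 * b t ^ 2) with hβ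
  have hαm : Measurable α := by apply Measurable.ennreal_ofReal; fun_prop
  have hβm : Measurable β := by apply Measurable.ennreal_ofReal; fun_prop
  have h1 : ∀ ξ, H ξ ^ 2 ≤ ENNReal.ofReal (Real.pi / (8 * q)) * ∫⁻ t, α t * β (ξ - t) := by
    intro ξ
    have hcr := cr_continuous ξ
    have e : ∀ t, ENNReal.ofReal (|cr t ξ| * (a t * b (ξ - t)))
        = ENNReal.ofReal (|cr t ξ| / ((‖t‖ ^ 2 + q) * (‖ξ - t‖ ^ 2 + q))) *
          ENNReal.ofReal (((‖t‖ ^ 2 + q) * a t) * ((‖ξ - t‖ ^ 2 + q) * b (ξ - t))) := by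
      intro t
      rw [← ENNReal.ofReal_mul (by positivity)]
      congr 1
      field_simp
    calc H ξ ^ 2 ≤ (∫⁻ t, ENNReal.ofReal (|cr t ξ| * (a t * b (ξ - t)))) ^ 2 := by
          gcongr; exact hH ξ
      _ ≤ _ := by
          simp_rw [e]
          refine lcs _ _ _ ?_ ?_
          · apply Measurable.aemeasurable
            apply Measurable.ennreal_ofReal
            have := hcr.measurable
            fun_prop
          · apply Measurable.aemeasurable
            apply Measurable.ennreal_ofReal
            fun_prop
      _ ≤ _ := by
          refine mul_le_mul' ?_ ?_
          · refine le_trans (le_of_eq ?_) (kernel_bound q hq ξ)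
            congr 1
            ext t
            rw [← ENNReal.ofReal_pow (by positivity), div_pow, sq_abs, mul_pow]
          · refine le_of_eq ?_
            congr 1
            ext t
            have := ha0 t
            have := hb0 (ξ - t)
            rw [← ENNReal.ofReal_pow (by positivity), hα, hβ]
            simp only
            rw [← ENNReal.ofReal_mul (by positivity)]
            congr 1
            ring
  calc ∫⁻ ξ, H ξ ^ 2 ≤ ∫⁻ ξ, ENNReal.ofReal (Real.pi / (8 * q)) * ∫⁻ t, α t * β (ξ - t) :=
        lintegral_mono h1
    _ = ENNReal.ofReal (Real.pi / (8 * q)) * ∫⁻ ξ, ∫⁻ t, α t * β (ξ - t) :=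
        lintegral_const_mul' _ _ ENNReal.ofReal_ne_top
    _ = ENNReal.ofReal (Real.pi / (8 * q)) * ∫⁻ t, ∫⁻ ξ, α t * β (ξ - t) := by
        rw [lintegral_lintegral_swap]
        apply Measurable.aemeasurable
        fun_prop
    _ = _ := by
        congr 1
        rw [← lintegral_mul_const _ hαm]
        congr 1
        ext t
        rw [lintegral_const_mul _ (by fun_prop), lintegral_sub_right_eq_self β t]

open FourierTransform SchwartzMap LineDeriv in
lemma planch (f : 𝓢(E2, ℂ)) : ∫ ξ, ‖(𝓕⁻ f : 𝓢(E2, ℂ)) ξ‖ ^ 2 = ∫ x, ‖f x‖ ^ 2 := by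
  rw [← integral_norm_sq_fourier (𝓕⁻ f)]
  simp

open FourierTransform SchwartzMap LineDeriv in
lemma finv_deriv (f : 𝓢(E2, ℂ)) (m ξ : E2) :
    (𝓕⁻ (∂_{m} f) : 𝓢(E2, ℂ)) ξ
      = -(2 * Real.pi * Complex.I) * (inner ℝ ξ m * (𝓕⁻ f : 𝓢(E2, ℂ)) ξ) := by
  rw [fourierInv_lineDerivOp_eq]
  have : (fun x : E2 => inner ℝ x m).HasTemperateGrowth := by fun_prop
  simp [smulLeftCLM_apply_apply this]

open FourierTransform SchwartzMap LineDeriv in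
lemma norm_finv_deriv_sq (f : 𝓢(E2, ℂ)) (m ξ : E2) :
    ‖(𝓕⁻ (∂_{m} f) : 𝓢(E2, ℂ)) ξ‖ ^ 2
      = 4 * Real.pi ^ 2 * ((inner ℝ ξ m) ^ 2 * ‖(𝓕⁻ f : 𝓢(E2, ℂ)) ξ‖ ^ 2) := by
  rw [finv_deriv]
  simp only [norm_mul, norm_neg, Complex.norm_real, Complex.norm_I, Complex.norm_ofNat,
    mul_pow, Real.norm_eq_abs, sq_abs]
  ring

open FourierTransform SchwartzMap LineDeriv in
lemma sup_bound (Ω : Set E2) (hΩ : MeasurableSet Ω) (hfin : volume Ω ≠ ⊤)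
    (f : 𝓢(E2, ℂ)) (hf : ∀ x, x ∉ Ω → f x = 0) (ξ : E2) :
    ‖(𝓕⁻ f : 𝓢(E2, ℂ)) ξ‖ ^ 2 ≤ (volume Ω).toReal * ∫ x, ‖f x‖ ^ 2 := by
  have h1 : ‖(𝓕⁻ f : 𝓢(E2, ℂ)) ξ‖ₑ ≤ ∫⁻ x, Ω.indicator 1 x * ‖f x‖ₑ := by
    rw [fourierInv_coe, Real.fourierInv_eq]
    refine (enorm_integral_le_lintegral_enorm _).trans (lintegral_mono fun x => ?_)
    by_cases hx : x ∈ Ω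
    · refine le_of_eq ?_
      rw [Set.indicator_of_mem hx, Pi.one_apply, one_mul, ← ofReal_norm, ← ofReal_norm,
        Circle.norm_smul]
    · simp [hx, hf x hx]
  have hm : AEMeasurable (fun x => ‖f x‖ₑ) volume := f.continuous.measurable.enorm.aemeasurable
  have h2 := lcs volume (Ω.indicator 1) (fun x => ‖f x‖ₑ)
    ((measurable_one.indicator hΩ).aemeasurable) hm
  have h3 : ∫⁻ x, (Ω.indicator 1 x : ENNReal) ^ 2 = volume Ω := by
    rw [← lintegral_indicator_one hΩ]
    congr 1
    ext x
    by_cases hx : x ∈ Ω <;> simp [hx]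
  have hi : Integrable (fun x => ‖f x‖ ^ 2) := (f.memLp 2).integrable_norm_pow (by norm_num)
  have h4 : ∫⁻ x, ‖f x‖ₑ ^ 2 = ENNReal.ofReal (∫ x, ‖f x‖ ^ 2) := by
    rw [ofReal_integral_eq_lintegral_ofReal hi (Filter.Eventually.of_forall fun x => by
      simp only [Pi.zero_apply]; positivity)]
    congr 1
    ext x
    rw [ENNReal.ofReal_pow (norm_nonneg _), ofReal_norm]
  rw [h3, h4] at h2
  have h5 : ENNReal.ofReal (‖(𝓕⁻ f : 𝓢(E2, ℂ)) ξ‖ ^ 2)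
      ≤ ENNReal.ofReal ((volume Ω).toReal * ∫ x, ‖f x‖ ^ 2) := by
    rw [ENNReal.ofReal_pow (norm_nonneg _), ofReal_norm, ENNReal.ofReal_mul ENNReal.toReal_nonneg,
      ENNReal.ofReal_toReal hfin]
    exact le_trans (by gcongr) h2
  refine (ENNReal.ofReal_le_ofReal_iff ?_).1 h5
  exact mul_nonneg ENNReal.toReal_nonneg (integral_nonneg fun x => by positivity)

open SchwartzMap in
lemma weight_integrable (u : 𝓢(E2, ℂ)) (k : ℕ) :
    Integrable (fun x => ‖x‖ ^ k * ‖u x‖ ^ 2) := by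
  have h := u.integrable_pow_mul volume k
  have hc : Continuous (fun x => ‖u x‖) := u.continuous.norm
  have := h.bdd_mul (c := SchwartzMap.seminorm ℝ 0 0 u) hc.aestronglyMeasurable
    (Filter.Eventually.of_forall fun x => by simpa using norm_le_seminorm ℝ u x)
  refine this.congr (Filter.Eventually.of_forall fun x => ?_)
  simp only
  ring

lemma inner_rot_sq (η ξ : E2) :
    (inner ℝ η ξ : ℝ) ^ 2 + (inner ℝ η (rotE ξ) : ℝ) ^ 2 = ‖ξ‖ ^ 2 * ‖η‖ ^ 2 := by
  rw [normsq_E, normsq_E]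
  simp only [PiLp.inner_apply, Fin.sum_univ_two, rotE_zero, rotE_one]
  simp
  ring

open SchwartzMap in
lemma inner_integrable (u : 𝓢(E2, ℂ)) (ξ : E2) :
    Integrable (fun η : E2 => (inner ℝ η ξ : ℝ) ^ 2 * ‖u η‖ ^ 2) := by
  have hc : Continuous (fun η : E2 => (inner ℝ η ξ : ℝ) ^ 2 * ‖u η‖ ^ 2) :=
    ((continuous_id.inner continuous_const).pow 2).mul (u.continuous.norm.pow 2)
  refine ((weight_integrable u 2).const_mul (‖ξ‖ ^ 2)).mono' hc.aestronglyMeasurable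
    (Filter.Eventually.of_forall fun η => ?_)
  rw [Real.norm_eq_abs, abs_of_nonneg (by positivity), ← mul_assoc]
  gcongr
  have := inner_rot_sq η ξ
  nlinarith [sq_nonneg (inner ℝ η (rotE ξ) : ℝ)]

open SchwartzMap in
lemma sum_bound (u : 𝓢(E2, ℂ)) (A N1 : ℝ) (hA : 0 < A)
    (hN1 : N1 = ∫ ξ, ‖ξ‖ ^ 2 * ‖u ξ‖ ^ 2)
    (key : ∀ ξ : E2, ‖ξ‖ ^ 4 * ‖u ξ‖ ^ 2 ≤ A * ∫ η, (inner ℝ η ξ : ℝ) ^ 2 * ‖u η‖ ^ 2) (ξ : E2) :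
    ‖ξ‖ ^ 2 * ‖u ξ‖ ^ 2 + ‖rotE ξ‖ ^ 2 * ‖u (rotE ξ)‖ ^ 2 ≤ 2 * (A * N1 / 2) := by
  have hN0 : 0 ≤ N1 := by rw [hN1]; exact integral_nonneg fun x => by positivity
  have k1 := key ξ
  have k2 := key (rotE ξ)
  have k3 : (∫ η, (inner ℝ η ξ : ℝ) ^ 2 * ‖u η‖ ^ 2)
      + ∫ η, (inner ℝ η (rotE ξ) : ℝ) ^ 2 * ‖u η‖ ^ 2 = ‖ξ‖ ^ 2 * N1 := by
    rw [← integral_add (inner_integrable u _) (inner_integrable u _), hN1, ← integral_const_mul]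
    refine integral_congr_ae (Filter.Eventually.of_forall fun η => ?_)
    simp only
    rw [← add_mul, inner_rot_sq, mul_assoc]
  generalize (∫ η, (inner ℝ η ξ : ℝ) ^ 2 * ‖u η‖ ^ 2) = I1 at *
  generalize (∫ η, (inner ℝ η (rotE ξ) : ℝ) ^ 2 * ‖u η‖ ^ 2) = I2 at *
  rw [LinearIsometryEquiv.norm_map] at k2 ⊢
  generalize ‖u ξ‖ ^ 2 = a at *
  generalize ‖u (rotE ξ)‖ ^ 2 = b at *
  rcases (norm_nonneg ξ).eq_or_lt with h0 | h0
  · rw [← h0]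
    have : 0 ≤ A * N1 := by positivity
    linarith
  · have hp : 0 < ‖ξ‖ ^ 2 := by positivity
    refine le_of_mul_le_mul_left ?_ hp
    calc ‖ξ‖ ^ 2 * (‖ξ‖ ^ 2 * a + ‖ξ‖ ^ 2 * b) = ‖ξ‖ ^ 4 * a + ‖ξ‖ ^ 4 * b := by ring
      _ ≤ A * (‖ξ‖ ^ 2 * N1) := by rw [← k3]; linarith
      _ = _ := by ring

open SchwartzMap in
lemma poinc1 (u : 𝓢(E2, ℂ)) (A : ℝ) (hA0 : 0 < A)
    (key : ∀ ξ : E2, ‖ξ‖ ^ 4 * ‖u ξ‖ ^ 2 ≤ A * ∫ η, (inner ℝ η ξ : ℝ) ^ 2 * ‖u η‖ ^ 2) :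
    ∫ ξ, ‖ξ‖ ^ 2 * ‖u ξ‖ ^ 2 ≤ Real.pi * A * ∫ ξ, ‖ξ‖ ^ 4 * ‖u ξ‖ ^ 2 := by
  have hpi := Real.pi_pos
  have hsum := sum_bound u A _ hA0 rfl key
  have e4 : ∀ x : E2, ‖x‖ ^ 2 * (‖x‖ ^ 2 * ‖u x‖ ^ 2) = ‖x‖ ^ 4 * ‖u x‖ ^ 2 := by
    intro x; ring
  have hb := bathtub (fun ξ => ‖ξ‖ ^ 2 * ‖u ξ‖ ^ 2) _ (Real.sqrt (2 / (Real.pi * A)))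
    (Real.sqrt_pos.2 (by positivity)) (fun x => by positivity) (weight_integrable u 2)
    (by simpa only [e4] using weight_integrable u 4) hsum
  simp only [e4] at hb
  rw [Real.sq_sqrt (by positivity)] at hb
  generalize ∫ ξ, ‖ξ‖ ^ 2 * ‖u ξ‖ ^ 2 = N1 at *
  generalize ∫ ξ, ‖ξ‖ ^ 4 * ‖u ξ‖ ^ 2 = N2 at *
  have r1 : A * N1 / 2 * (Real.pi * (2 / (Real.pi * A)) / 2) = N1 / 2 := by field_simp
  have r2 : N2 / (2 / (Real.pi * A)) = (Real.pi * A * N2) / 2 := by field_simp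
  rw [r1, r2] at hb
  linarith

open SchwartzMap in
lemma poinc0 (u : 𝓢(E2, ℂ)) (A : ℝ) (hA0 : 0 < A)
    (key : ∀ ξ : E2, ‖u ξ‖ ^ 2 ≤ A * ∫ η, ‖u η‖ ^ 2) :
    ∫ ξ, ‖u ξ‖ ^ 2 ≤ 2 * Real.pi * A * ∫ ξ, ‖ξ‖ ^ 2 * ‖u ξ‖ ^ 2 := by
  have hpi := Real.pi_pos
  have i0 : Integrable (fun x => ‖u x‖ ^ 2) := by simpa using weight_integrable u 0
  have hb := bathtub (fun ξ => ‖u ξ‖ ^ 2) (A * ∫ η, ‖u η‖ ^ 2) (Real.sqrt (1 / (Real.pi * A)))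
    (Real.sqrt_pos.2 (by positivity)) (fun x => by positivity) i0 (weight_integrable u 2)
    (fun ξ => by linarith [key ξ, key (rotE ξ)])
  rw [Real.sq_sqrt (by positivity)] at hb
  generalize ∫ ξ, ‖ξ‖ ^ 2 * ‖u ξ‖ ^ 2 = N1 at *
  generalize ∫ ξ, ‖u ξ‖ ^ 2 = N0 at *
  have r1 : A * N0 * (Real.pi * (1 / (Real.pi * A)) / 2) = N0 / 2 := by field_simp
  have r2 : N1 / (1 / (Real.pi * A)) = (Real.pi * A * N1) := by field_simp
  rw [r1, r2] at hb
  linarith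

open FourierTransform SchwartzMap LineDeriv in
lemma poincare (Ω : Set E2) (hΩ : MeasurableSet Ω) (hfin : volume Ω ≠ ⊤) (A : ℝ)
    (hA : A = (volume Ω).toReal) (hA0 : 0 < A)
    (f : 𝓢(E2, ℂ)) (hf : ∀ x, x ∉ Ω → f x = 0)
    (hf' : ∀ m : E2, ∀ x, x ∉ Ω → (∂_{m} f : 𝓢(E2, ℂ)) x = 0) :
    (∫ ξ, ‖ξ‖ ^ 2 * ‖(𝓕⁻ f : 𝓢(E2, ℂ)) ξ‖ ^ 2
        ≤ Real.pi * A * ∫ ξ, ‖ξ‖ ^ 4 * ‖(𝓕⁻ f : 𝓢(E2, ℂ)) ξ‖ ^ 2) ∧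
    (∫ ξ, ‖(𝓕⁻ f : 𝓢(E2, ℂ)) ξ‖ ^ 2
        ≤ 2 * Real.pi * A * ∫ ξ, ‖ξ‖ ^ 2 * ‖(𝓕⁻ f : 𝓢(E2, ℂ)) ξ‖ ^ 2) := by
  have hpi := Real.pi_pos
  constructor
  · refine poinc1 _ A hA0 fun ξ => ?_
    have h := sup_bound Ω hΩ hfin (∂_{ξ} f) (hf' ξ) ξ
    rw [← planch] at h
    simp only [norm_finv_deriv_sq] at h
    rw [integral_const_mul, real_inner_self_eq_norm_sq, ← hA] at h
    have hp : 0 < 4 * Real.pi ^ 2 := by positivity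
    refine le_of_mul_le_mul_left (le_trans (le_of_eq ?_) (h.trans (le_of_eq ?_))) hp <;> ring
  · refine poinc0 _ A hA0 fun ξ => ?_
    have h := sup_bound Ω hΩ hfin f hf ξ
    rwa [← planch, ← hA] at h

open FourierTransform SchwartzMap LineDeriv in
lemma weighted (Ω : Set E2) (hΩ : MeasurableSet Ω) (hfin : volume Ω ≠ ⊤) (A : ℝ)
    (hA : A = (volume Ω).toReal) (hA0 : 0 < A)
    (f : 𝓢(E2, ℂ)) (hf : ∀ x, x ∉ Ω → f x = 0)
    (hf' : ∀ m : E2, ∀ x, x ∉ Ω → (∂_{m} f : 𝓢(E2, ℂ)) x = 0) :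
    ∫⁻ t, ENNReal.ofReal ((‖t‖ ^ 2 + 1 / (4 * Real.pi * A)) ^ 2 * ‖(𝓕⁻ f : 𝓢(E2, ℂ)) t‖ ^ 2)
      ≤ ENNReal.ofReal (13 / 8 * ∫ ξ, ‖ξ‖ ^ 4 * ‖(𝓕⁻ f : 𝓢(E2, ℂ)) ξ‖ ^ 2) := by
  obtain ⟨h1, h2⟩ := poincare Ω hΩ hfin A hA hA0 f hf hf'
  set u : 𝓢(E2, ℂ) := 𝓕⁻ f with hu
  have hpi := Real.pi_pos
  have i0 : Integrable (fun x => ‖u x‖ ^ 2) := by simpa using weight_integrable u 0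
  have i2 := weight_integrable u 2
  have i4 := weight_integrable u 4
  set q := 1 / (4 * Real.pi * A) with hq
  have hq0 : 0 < q := by positivity
  have e : ∀ t : E2, (‖t‖ ^ 2 + q) ^ 2 * ‖u t‖ ^ 2
      = ‖t‖ ^ 4 * ‖u t‖ ^ 2 + 2 * q * (‖t‖ ^ 2 * ‖u t‖ ^ 2) + q ^ 2 * ‖u t‖ ^ 2 := by
    intro t; ring
  have i42 : Integrable (fun t : E2 => ‖t‖ ^ 4 * ‖u t‖ ^ 2 + 2 * q * (‖t‖ ^ 2 * ‖u t‖ ^ 2)) :=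
    i4.add (i2.const_mul _)
  have iall : Integrable (fun t : E2 => (‖t‖ ^ 2 + q) ^ 2 * ‖u t‖ ^ 2) := by
    simp only [e]
    exact i42.add (i0.const_mul _)
  rw [← ofReal_integral_eq_lintegral_ofReal iall (Filter.Eventually.of_forall fun x => by
      simp only [Pi.zero_apply]; positivity)]
  apply ENNReal.ofReal_le_ofReal
  simp only [e]
  rw [integral_add i42 (i0.const_mul _), integral_add i4 (i2.const_mul _),
    integral_const_mul, integral_const_mul]
  set N0 := ∫ ξ, ‖u ξ‖ ^ 2
  set N1 := ∫ ξ, ‖ξ‖ ^ 2 * ‖u ξ‖ ^ 2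
  set N2 := ∫ ξ, ‖ξ‖ ^ 4 * ‖u ξ‖ ^ 2
  have b1 : 2 * q * N1 ≤ N2 / 2 := by
    calc 2 * q * N1 ≤ 2 * q * (Real.pi * A * N2) := by gcongr
      _ = N2 / 2 := by rw [hq]; field_simp; norm_num
  have b0 : q ^ 2 * N0 ≤ N2 / 8 := by
    calc q ^ 2 * N0 ≤ q ^ 2 * (2 * Real.pi * A * (Real.pi * A * N2)) := by
          gcongr
          exact h2.trans (by gcongr)
      _ = N2 / 8 := by rw [hq]; field_simp; norm_num; ring
  linarith

lemma cfderiv (g : E2 → ℝ) (x m : E2) (hg : DifferentiableAt ℝ g x) :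
    fderiv ℝ (fun y => (g y : ℂ)) x m = (fderiv ℝ g x m : ℂ) := by
  have h := (Complex.ofRealCLM.hasFDerivAt (x := g x)).comp x hg.hasFDerivAt
  have h2 : HasFDerivAt (fun y => (g y : ℂ)) (Complex.ofRealCLM.comp (fderiv ℝ g x)) x := h
  rw [h2.fderiv]
  simp

open FourierTransform SchwartzMap LineDeriv in
lemma test_schwartz (Ω : Set E2) (w : E2 → ℝ) (hw : IsTest Ω w) :
    ∃ W : 𝓢(E2, ℂ), (∀ i x, (∂_{(EuclideanSpace.single i 1 : E2)} W) x = (pd w i x : ℂ)) ∧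
      (∀ i j x, (∂_{(EuclideanSpace.single i 1 : E2)} (∂_{(EuclideanSpace.single j 1 : E2)} W)) x
        = (pd2 w i j x : ℂ)) ∧
      (∀ x, x ∉ Ω → W x = 0) ∧ (∀ (m x : E2), x ∉ Ω → (∂_{m} W : 𝓢(E2, ℂ)) x = 0) ∧
      (∀ i x, x ∉ Ω → pd w i x = 0) ∧ (∀ i j x, x ∉ Ω → pd2 w i j x = 0) ∧
      (∀ i, Continuous (pd w i)) ∧ (∀ i j, Continuous (pd2 w i j)) := by
  obtain ⟨h1, h2, h3⟩ := hw
  have hd : Differentiable ℝ w := h1.differentiable (by simp)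
  have c1 : HasCompactSupport (fun x => (w x : ℂ)) := h2.comp_left (g := fun r : ℝ => (r : ℂ)) (by simp)
  have c2 : ContDiff ℝ (⊤ : ℕ∞) (fun x => (w x : ℂ)) := Complex.ofRealCLM.contDiff.comp h1
  have hpd : ∀ i, ContDiff ℝ (⊤ : ℕ∞) (fun y => pd w i y) := by
    intro i
    have : ContDiff ℝ (⊤ : ℕ∞) (fderiv ℝ w) := h1.fderiv_right (by simp)
    exact this.clm_apply contDiff_const
  have hpd2 : ∀ i j, ContDiff ℝ (⊤ : ℕ∞) (fun y => pd2 w i j y) := by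
    intro i j
    have : ContDiff ℝ (⊤ : ℕ∞) (fderiv ℝ (fun y => pd w j y)) := (hpd j).fderiv_right (by simp)
    exact this.clm_apply contDiff_const
  have hW1 : ∀ m x, (∂_{m} (c1.toSchwartzMap c2)) x = (fderiv ℝ w x m : ℂ) := by
    intro m x
    rw [SchwartzMap.lineDerivOp_apply_eq_fderiv]
    exact cfderiv w x m (hd x)
  have hpdc : ∀ i x, (∂_{(EuclideanSpace.single i 1 : E2)} (c1.toSchwartzMap c2)) x = (pd w i x : ℂ) :=
    fun i x => hW1 _ x
  have hns : ∀ x, x ∉ Ω → x ∉ tsupport w := fun x hx h => hx (h3 h)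
  refine ⟨c1.toSchwartzMap c2, hpdc, ?_, ?_, ?_, ?_, ?_, fun i => (hpd i).continuous,
    fun i j => (hpd2 i j).continuous⟩
  · intro i j x
    rw [SchwartzMap.lineDerivOp_apply_eq_fderiv]
    have : (⇑(∂_{(EuclideanSpace.single j 1 : E2)} (c1.toSchwartzMap c2) : 𝓢(E2, ℂ)) : E2 → ℂ)
        = fun y => ((pd w j y : ℝ) : ℂ) := funext (hpdc j)
    rw [this]
    exact cfderiv _ x _ ((hpd j).differentiable (by simp) x)
  · intro x hx
    change ((w x : ℝ) : ℂ) = 0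
    rw [image_eq_zero_of_notMem_tsupport (hns x hx)]; simp
  · intro m x hx
    rw [hW1, fderiv_of_notMem_tsupport ℝ (hns x hx)]; simp
  · intro i x hx
    rw [pd, fderiv_of_notMem_tsupport ℝ (hns x hx)]; simp
  · intro i j x hx
    have : x ∉ tsupport (fun y => pd w j y) := fun h =>
      hns x hx (tsupport_fderiv_apply_subset ℝ (EuclideanSpace.single j 1) h)
    rw [pd2, fderiv_of_notMem_tsupport ℝ this]; simp

lemma inner_single (ξ : E2) (i : Fin 2) : inner ℝ ξ (EuclideanSpace.single i 1 : E2) = ξ i := by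
  simp [EuclideanSpace.inner_single_right]

open SchwartzMap in
lemma coord_integrable (u : 𝓢(E2, ℂ)) (i j : Fin 2) :
    Integrable (fun ξ : E2 => ξ i ^ 2 * (ξ j ^ 2 * ‖u ξ‖ ^ 2)) := by
  refine (weight_integrable u 4).mono' (by fun_prop) (Filter.Eventually.of_forall fun x => ?_)
  have h1 : ∀ k, x k ^ 2 ≤ ‖x‖ ^ 2 := by
    intro k
    rw [normsq_E]
    fin_cases k <;> simp <;> positivity
  rw [Real.norm_of_nonneg (by positivity)]
  calc x i ^ 2 * (x j ^ 2 * ‖u x‖ ^ 2) ≤ ‖x‖ ^ 2 * (‖x‖ ^ 2 * ‖u x‖ ^ 2) := by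
        exact mul_le_mul (h1 i) (mul_le_mul_of_nonneg_right (h1 j) (by positivity))
          (by positivity) (by positivity)
    _ = _ := by ring

open FourierTransform SchwartzMap LineDeriv in
lemma pd2_planch (W : 𝓢(E2, ℂ)) (i j : Fin 2) :
    ∫ x, ‖(∂_{(EuclideanSpace.single i 1 : E2)} (∂_{(EuclideanSpace.single j 1 : E2)} W)) x‖ ^ 2
      = 16 * Real.pi ^ 4 * ∫ ξ : E2, ξ i ^ 2 * (ξ j ^ 2 * ‖(𝓕⁻ W : 𝓢(E2, ℂ)) ξ‖ ^ 2) := by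
  rw [← planch, ← integral_const_mul]
  congr 1
  ext ξ
  rw [norm_finv_deriv_sq, norm_finv_deriv_sq, inner_single, inner_single]
  ring

open FourierTransform SchwartzMap LineDeriv in
lemma lap_planch (W : 𝓢(E2, ℂ)) :
    ∫ x, ‖(∂_{(EuclideanSpace.single 0 1 : E2)} (∂_{(EuclideanSpace.single 0 1 : E2)} W)
        + ∂_{(EuclideanSpace.single 1 1 : E2)} (∂_{(EuclideanSpace.single 1 1 : E2)} W)) x‖ ^ 2
      = 16 * Real.pi ^ 4 * ∫ ξ : E2, ‖ξ‖ ^ 4 * ‖(𝓕⁻ W : 𝓢(E2, ℂ)) ξ‖ ^ 2 := by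
  rw [← planch, ← integral_const_mul]
  congr 1
  ext ξ
  rw [FourierTransform.fourierInv_add, add_apply, finv_deriv, finv_deriv, finv_deriv,
    finv_deriv, inner_single, inner_single]
  generalize (𝓕⁻ W : 𝓢(E2, ℂ)) ξ = z
  have : -(2 * (Real.pi : ℂ) * Complex.I) * ((ξ 0 : ℂ) * (-(2 * Real.pi * Complex.I) * (ξ 0 * z)))
      + -(2 * (Real.pi : ℂ) * Complex.I) * ((ξ 1 : ℂ) * (-(2 * Real.pi * Complex.I) * (ξ 1 * z)))
      = ((-(4 * Real.pi ^ 2 * ‖ξ‖ ^ 2) : ℝ) : ℂ) * z := by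
    rw [normsq_E]
    push_cast
    linear_combination (4 * Real.pi ^ 2 * (ξ 0 ^ 2 + ξ 1 ^ 2) * z : ℂ) * Complex.I_sq
  rw [this, norm_mul, mul_pow, Complex.norm_real, Real.norm_eq_abs, sq_abs]
  ring

open FourierTransform SchwartzMap LineDeriv in
lemma hess_planch (W : 𝓢(E2, ℂ)) (w : E2 → ℝ)
    (h : ∀ i j x, (∂_{(EuclideanSpace.single i 1 : E2)} (∂_{(EuclideanSpace.single j 1 : E2)} W)) x
        = (pd2 w i j x : ℂ)) :
    ∫ x, hess2 w x = 16 * Real.pi ^ 4 * ∫ ξ : E2, ‖ξ‖ ^ 4 * ‖(𝓕⁻ W : 𝓢(E2, ℂ)) ξ‖ ^ 2 := by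
  have e : ∀ i j, ∫ x, pd2 w i j x ^ 2
      = 16 * Real.pi ^ 4 * ∫ ξ : E2, ξ i ^ 2 * (ξ j ^ 2 * ‖(𝓕⁻ W : 𝓢(E2, ℂ)) ξ‖ ^ 2) := by
    intro i j
    rw [← pd2_planch]
    congr 1
    ext x
    rw [h, Complex.norm_real, Real.norm_eq_abs, sq_abs]
  have hi : ∀ i j, Integrable (fun x => pd2 w i j x ^ 2) := by
    intro i j
    have := weight_integrable
      (∂_{(EuclideanSpace.single i 1 : E2)} (∂_{(EuclideanSpace.single j 1 : E2)} W)) 0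
    refine this.congr (Filter.Eventually.of_forall fun x => ?_)
    simp only
    rw [h, Complex.norm_real, Real.norm_eq_abs, sq_abs, pow_zero, one_mul]
  have hc := coord_integrable (𝓕⁻ W : 𝓢(E2, ℂ))
  simp only [hess2]
  rw [integral_finsetSum _ (fun i _ => integrable_finsetSum _ (fun j _ => hi i j))]
  simp_rw [integral_finsetSum Finset.univ (fun j _ => hi _ j), e, ← Finset.mul_sum]
  congr 1
  simp_rw [← integral_finsetSum Finset.univ (fun j _ => hc _ j)]
  rw [← integral_finsetSum _ (fun i _ => integrable_finsetSum _ (fun j _ => hc i j))]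
  congr 1
  ext ξ
  simp only [Fin.sum_univ_two]
  have : ‖ξ‖ ^ 4 = (ξ 0 ^ 2 + ξ 1 ^ 2) ^ 2 := by rw [← normsq_E]; ring
  rw [this]; ring

open FourierTransform SchwartzMap LineDeriv in
lemma sconv_apply (u1 u2 : 𝓢(E2, ℂ)) (ξ : E2) :
    (SchwartzMap.convolution (ContinuousLinearMap.mul ℂ ℂ) u1 u2) ξ = ∫ t, u1 t * u2 (ξ - t) := by
  rw [SchwartzMap.convolution_apply]
  simp [MeasureTheory.convolution]

open SchwartzMap in
lemma sconv_integrable (u1 u2 : 𝓢(E2, ℂ)) (ξ : E2) :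
    Integrable (fun t => u1 t * u2 (ξ - t)) := by
  refine (u1.integrable).mul_bdd (c := SchwartzMap.seminorm ℝ 0 0 u2) ?_ ?_
  · exact (u2.continuous.comp (by fun_prop)).aestronglyMeasurable
  · exact Filter.Eventually.of_forall fun x => SchwartzMap.norm_le_seminorm ℝ u2 _

open FourierTransform SchwartzMap LineDeriv in
lemma sfourier_sub (u1 u2 : 𝓢(E2, ℂ)) : (𝓕 (u1 - u2) : 𝓢(E2, ℂ)) = 𝓕 u1 - 𝓕 u2 :=
  map_sub (FourierTransform.fourierCLM ℂ 𝓢(E2, ℂ)) u1 u2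

open FourierTransform SchwartzMap LineDeriv in
lemma jac_bound (W Φ : 𝓢(E2, ℂ)) (J : E2 → ℝ)
    (hJ : ∀ x, (J x : ℂ) = (∂_{(EuclideanSpace.single 1 1 : E2)} W) x *
        (∂_{(EuclideanSpace.single 0 1 : E2)} Φ) x
      - (∂_{(EuclideanSpace.single 0 1 : E2)} W) x * (∂_{(EuclideanSpace.single 1 1 : E2)} Φ) x)
    (q : ℝ) (hq : 0 < q) (C1 C2 : ℝ) (hC1 : 0 ≤ C1) (hC2 : 0 ≤ C2)
    (h1 : ∫⁻ t, ENNReal.ofReal ((‖t‖ ^ 2 + q) ^ 2 * ‖(𝓕⁻ W : 𝓢(E2, ℂ)) t‖ ^ 2)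
      ≤ ENNReal.ofReal C1)
    (h2 : ∫⁻ t, ENNReal.ofReal ((‖t‖ ^ 2 + q) ^ 2 * ‖(𝓕⁻ Φ : 𝓢(E2, ℂ)) t‖ ^ 2)
      ≤ ENNReal.ofReal C2) :
    Integrable (fun x => J x ^ 2) ∧
      ∫ x, J x ^ 2 ≤ 16 * Real.pi ^ 4 * (Real.pi / (8 * q)) * (C1 * C2) := by
  obtain ⟨H, hH⟩ : ∃ H : 𝓢(E2, ℂ), H =
      SchwartzMap.convolution (ContinuousLinearMap.mul ℂ ℂ)
        (𝓕⁻ (∂_{(EuclideanSpace.single 1 1 : E2)} W)) (𝓕⁻ (∂_{(EuclideanSpace.single 0 1 : E2)} Φ))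
      - SchwartzMap.convolution (ContinuousLinearMap.mul ℂ ℂ)
        (𝓕⁻ (∂_{(EuclideanSpace.single 0 1 : E2)} W))
        (𝓕⁻ (∂_{(EuclideanSpace.single 1 1 : E2)} Φ)) := ⟨_, rfl⟩
  have hFH : ∀ x, (𝓕 H : 𝓢(E2, ℂ)) x = J x := by
    intro x
    rw [hH, hJ, sfourier_sub, sub_apply, SchwartzMap.fourier_convolution,
      SchwartzMap.fourier_convolution, SchwartzMap.pairing_apply_apply,
      SchwartzMap.pairing_apply_apply]
    simp
  have hJn : ∀ x, J x ^ 2 = ‖(𝓕 H : 𝓢(E2, ℂ)) x‖ ^ 2 := by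
    intro x
    rw [hFH, Complex.norm_real, Real.norm_eq_abs, sq_abs]
  have hJi : ∫ x, J x ^ 2 = ∫ ξ, ‖H ξ‖ ^ 2 := by
    rw [← integral_norm_sq_fourier H]
    simp_rw [hJn]
  refine ⟨?_, ?_⟩
  · have := weight_integrable (𝓕 H : 𝓢(E2, ℂ)) 0
    refine this.congr (Filter.Eventually.of_forall fun x => ?_)
    simp only
    rw [hJn, pow_zero, one_mul]
  rw [hJi]
  have hHi : Integrable (fun ξ => ‖H ξ‖ ^ 2) := by
    simpa using weight_integrable H 0
  have hpt : ∀ ξ, ENNReal.ofReal (‖H ξ‖ / (4 * Real.pi ^ 2)) ≤ ∫⁻ t, ENNReal.ofReal (|cr t ξ| *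
      (‖(𝓕⁻ W : 𝓢(E2, ℂ)) t‖ * ‖(𝓕⁻ Φ : 𝓢(E2, ℂ)) (ξ - t)‖)) := by
    intro ξ
    have hval : H ξ = ∫ t, ((-(4 * Real.pi ^ 2 * cr t ξ) : ℝ) : ℂ) *
        ((𝓕⁻ W : 𝓢(E2, ℂ)) t * (𝓕⁻ Φ : 𝓢(E2, ℂ)) (ξ - t)) := by
      rw [hH, sub_apply, sconv_apply, sconv_apply,
        ← integral_sub (sconv_integrable _ _ _) (sconv_integrable _ _ _)]
      congr 1
      ext t
      rw [finv_deriv, finv_deriv, finv_deriv, finv_deriv, inner_single, inner_single, inner_single,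
        inner_single]
      generalize (𝓕⁻ W : 𝓢(E2, ℂ)) t = z
      generalize (𝓕⁻ Φ : 𝓢(E2, ℂ)) (ξ - t) = y
      simp only [cr, PiLp.sub_apply]
      push_cast
      linear_combination (4 * Real.pi ^ 2 * (t 1 * ξ 0 - t 0 * ξ 1) * z * y : ℂ) * Complex.I_sq
    rw [ENNReal.ofReal_div_of_pos (by positivity)]
    refine ENNReal.div_le_of_le_mul ?_
    rw [ofReal_norm, hval]
    refine (enorm_integral_le_lintegral_enorm _).trans (le_of_eq ?_)
    rw [← lintegral_mul_const' _ _ ENNReal.ofReal_ne_top]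
    congr 1
    ext t
    rw [← ofReal_norm, ← ENNReal.ofReal_mul (by positivity), norm_mul, norm_mul,
      Complex.norm_real, Real.norm_eq_abs, abs_neg, abs_mul, abs_of_nonneg (by positivity)]
    congr 1
    ring
  have hcb := conv_bound (fun t => ‖(𝓕⁻ W : 𝓢(E2, ℂ)) t‖) (fun t => ‖(𝓕⁻ Φ : 𝓢(E2, ℂ)) t‖)
    (𝓕⁻ W : 𝓢(E2, ℂ)).continuous.norm (𝓕⁻ Φ : 𝓢(E2, ℂ)).continuous.norm
    (fun _ => norm_nonneg _) (fun _ => norm_nonneg _) _ q hq hpt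
  have hfin : ∫⁻ ξ, ENNReal.ofReal (‖H ξ‖ / (4 * Real.pi ^ 2)) ^ 2
      ≤ ENNReal.ofReal (Real.pi / (8 * q) * (C1 * C2)) := by
    refine hcb.trans ?_
    rw [ENNReal.ofReal_mul (by positivity), ENNReal.ofReal_mul hC1]
    gcongr
  have hconv : ∫⁻ ξ, ENNReal.ofReal (‖H ξ‖ / (4 * Real.pi ^ 2)) ^ 2
      = ENNReal.ofReal ((∫ ξ, ‖H ξ‖ ^ 2) / (16 * Real.pi ^ 4)) := by
    rw [← integral_div, ofReal_integral_eq_lintegral_ofReal (hHi.div_const _)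
      (Filter.Eventually.of_forall fun x => by positivity)]
    congr 1
    ext ξ
    rw [← ENNReal.ofReal_pow (by positivity)]
    congr 1
    rw [div_pow]
    congr 1
    ring
  rw [hconv, ENNReal.ofReal_le_ofReal_iff (by positivity), div_le_iff₀ (by positivity)] at hfin
  linarith

/-- Real Cauchy-Schwarz inequality for square integrable continuous functions. -/
lemma real_cs (f g : E2 → ℝ) (hf : Continuous f) (hg : Continuous g)
    (hf2 : Integrable (fun x => f x ^ 2)) (hg2 : Integrable (fun x => g x ^ 2)) :
    |∫ x, f x * g x| ≤ Real.sqrt (∫ x, f x ^ 2) * Real.sqrt (∫ x, g x ^ 2) := by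
  have h := lcs volume (fun x => ‖f x‖ₑ) (fun x => ‖g x‖ₑ) (by fun_prop) (by fun_prop)
  have e : ∀ u : E2 → ℝ, Integrable (fun x => u x ^ 2) →
      ∫⁻ x, ‖u x‖ₑ ^ 2 = ENNReal.ofReal (∫ x, u x ^ 2) := by
    intro u hu
    rw [ofReal_integral_eq_lintegral_ofReal hu (Filter.Eventually.of_forall fun x => sq_nonneg _)]
    congr 1
    ext x
    rw [← ofReal_norm, ← ENNReal.ofReal_pow (norm_nonneg _), Real.norm_eq_abs, sq_abs]
  rw [e f hf2, e g hg2] at h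
  have hp : 0 ≤ ∫ x, f x ^ 2 := integral_nonneg fun x => sq_nonneg _
  have hq : 0 ≤ ∫ x, g x ^ 2 := integral_nonneg fun x => sq_nonneg _
  have h3 : ENNReal.ofReal (|∫ x, f x * g x| ^ 2)
      ≤ ENNReal.ofReal ((∫ x, f x ^ 2) * ∫ x, g x ^ 2) := by
    rw [ENNReal.ofReal_mul hp, ENNReal.ofReal_pow (abs_nonneg _), ← Real.norm_eq_abs, ofReal_norm]
    refine le_trans ?_ h
    gcongr
    refine (enorm_integral_le_lintegral_enorm _).trans (le_of_eq ?_)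
    simp only [enorm_mul]
  rw [ENNReal.ofReal_le_ofReal_iff (by positivity)] at h3
  rw [← Real.sqrt_mul hp]
  exact Real.le_sqrt_of_sq_le h3

lemma Gam_aux (Ω : Set E2) (hΩ : IsOpen Ω) (hbdd : Bornology.IsBounded Ω)
    (v w φ : E2 → ℝ) (hv : IsTest Ω v) (hw : IsTest Ω w) (hφ : IsTest Ω φ)
    (hA : 0 < (volume Ω).toReal) :
    |Gam Ω v w φ| ≤ Real.sqrt (volume Ω).toReal / Real.pi ^ 2 *
      (Real.sqrt (∫ x in Ω, hess2 v x) * Real.sqrt (∫ x in Ω, hess2 w x) *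
        Real.sqrt (∫ x in Ω, hess2 φ x)) := by
  obtain ⟨V, v1, v2, v3, v4, v5, v6, v7, v8⟩ := test_schwartz Ω v hv
  obtain ⟨W, w1, w2, w3, w4, w5, w6, w7, w8⟩ := test_schwartz Ω w hw
  obtain ⟨F, f1, f2, f3, f4, f5, f6, f7, f8⟩ := test_schwartz Ω φ hφ
  have hfin : volume Ω ≠ ⊤ := hbdd.measure_lt_top.ne
  obtain ⟨A, hAe⟩ : ∃ A, A = (volume Ω).toReal := ⟨_, rfl⟩
  rw [← hAe] at hA ⊢
  have hext : ∀ g : E2 → ℝ, (∀ x, x ∉ Ω → g x = 0) → ∫ x in Ω, g x = ∫ x, g x :=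
    fun g hg => setIntegral_eq_integral_of_forall_compl_eq_zero hg
  have hzero : ∀ g : E2 → ℝ, (∀ i j x, x ∉ Ω → pd2 g i j x = 0) →
      ∫ x in Ω, hess2 g x = ∫ x, hess2 g x := by
    intro g hg
    refine hext _ fun x hx => ?_
    simp [hess2, hg _ _ x hx]
  rw [hzero v v6, hzero w w6, hzero φ f6, hess_planch V v v2, hess_planch W w w2,
    hess_planch F φ f2, Gam, hext _ (fun x hx => by simp [w5 _ x hx])]
  have wW := weighted Ω hΩ.measurableSet hfin A hAe hA W w3 w4
  have wF := weighted Ω hΩ.measurableSet hfin A hAe hA F f3 f4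
  have lp := lap_planch V
  have hlap : ∀ x, lap v x ^ 2 = ‖(LineDeriv.lineDerivOp (EuclideanSpace.single 0 1 : E2)
      (LineDeriv.lineDerivOp (EuclideanSpace.single 0 1 : E2) V)
        + LineDeriv.lineDerivOp (EuclideanSpace.single 1 1 : E2)
      (LineDeriv.lineDerivOp (EuclideanSpace.single 1 1 : E2) V) : SchwartzMap E2 ℂ) x‖ ^ 2 := by
    intro x
    rw [add_apply, v2, v2, ← Complex.ofReal_add, Complex.norm_real, Real.norm_eq_abs, sq_abs, lap]
  have hlapi : Integrable (fun x => lap v x ^ 2) := by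
    have := weight_integrable (LineDeriv.lineDerivOp (EuclideanSpace.single 0 1 : E2)
      (LineDeriv.lineDerivOp (EuclideanSpace.single 0 1 : E2) V)
        + LineDeriv.lineDerivOp (EuclideanSpace.single 1 1 : E2)
      (LineDeriv.lineDerivOp (EuclideanSpace.single 1 1 : E2) V) : SchwartzMap E2 ℂ) 0
    refine this.congr (Filter.Eventually.of_forall fun x => ?_)
    simp only
    rw [hlap, pow_zero, one_mul]
  have lp2 := (integral_congr_ae (Filter.Eventually.of_forall hlap)).trans lp
  have nW : 0 ≤ ∫ ξ : E2, ‖ξ‖ ^ 4 * ‖(FourierTransformInv.fourierInv W : SchwartzMap E2 ℂ) ξ‖ ^ 2 :=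
    integral_nonneg fun x => by positivity
  have nF : 0 ≤ ∫ ξ : E2, ‖ξ‖ ^ 4 * ‖(FourierTransformInv.fourierInv F : SchwartzMap E2 ℂ) ξ‖ ^ 2 :=
    integral_nonneg fun x => by positivity
  obtain ⟨jI, jB⟩ := jac_bound W F (fun x => pd w 1 x * pd φ 0 x - pd w 0 x * pd φ 1 x)
    (fun x => by rw [w1, w1, f1, f1]; push_cast; ring) (1 / (4 * Real.pi * A)) (by positivity)
    _ _ (by positivity) (by positivity) wW wF
  have hcl : Continuous (lap v) := by
    have := (v8 0 0).add (v8 1 1)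
    exact this
  have cs := real_cs (lap v) (fun x => pd w 1 x * pd φ 0 x - pd w 0 x * pd φ 1 x) hcl
    (((w7 1).mul (f7 0)).sub ((w7 0).mul (f7 1))) hlapi jI
  rw [lp2] at cs
  refine cs.trans ?_
  generalize (∫ ξ : E2, ‖ξ‖ ^ 4 *
    ‖(FourierTransformInv.fourierInv V : SchwartzMap E2 ℂ) ξ‖ ^ 2) = NV at *
  generalize (∫ ξ : E2, ‖ξ‖ ^ 4 *
    ‖(FourierTransformInv.fourierInv W : SchwartzMap E2 ℂ) ξ‖ ^ 2) = NW at *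
  generalize (∫ ξ : E2, ‖ξ‖ ^ 4 *
    ‖(FourierTransformInv.fourierInv F : SchwartzMap E2 ℂ) ξ‖ ^ 2) = NF at *
  have hpi := Real.pi_pos
  have key : ∫ x, (pd w 1 x * pd φ 0 x - pd w 0 x * pd φ 1 x) ^ 2
      ≤ A / Real.pi ^ 4 * ((16 * Real.pi ^ 4 * NW) * (16 * Real.pi ^ 4 * NF)) := by
    refine jB.trans ?_
    have e1 : 16 * Real.pi ^ 4 * (Real.pi / (8 * (1 / (4 * Real.pi * A)))) *
        (13 / 8 * NW * (13 / 8 * NF)) = (169 / 8 * Real.pi ^ 2) * (A * Real.pi ^ 4 * (NW * NF)) := by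
      field_simp
      ring
    have e2 : A / Real.pi ^ 4 * ((16 * Real.pi ^ 4 * NW) * (16 * Real.pi ^ 4 * NF))
        = 256 * (A * Real.pi ^ 4 * (NW * NF)) := by
      field_simp
      ring
    rw [e1, e2]
    refine mul_le_mul_of_nonneg_right ?_ (by positivity)
    nlinarith [Real.pi_lt_d2]
  have hs : Real.sqrt (A / Real.pi ^ 4 * ((16 * Real.pi ^ 4 * NW) * (16 * Real.pi ^ 4 * NF)))
      = Real.sqrt A / Real.pi ^ 2 *
        (Real.sqrt (16 * Real.pi ^ 4 * NW) * Real.sqrt (16 * Real.pi ^ 4 * NF)) := by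
    rw [Real.sqrt_mul (by positivity), Real.sqrt_mul (by positivity), Real.sqrt_div hA.le,
      show Real.pi ^ 4 = (Real.pi ^ 2) ^ 2 by ring, Real.sqrt_sq (by positivity)]
  calc _ ≤ Real.sqrt (16 * Real.pi ^ 4 * NV) * (Real.sqrt A / Real.pi ^ 2 *
        (Real.sqrt (16 * Real.pi ^ 4 * NW) * Real.sqrt (16 * Real.pi ^ 4 * NF))) := by
        rw [← hs]
        gcongr
    _ = _ := by ring

/-- `|Γ(v,w,φ)| ≤ (|Ω|^{1/2}/π²) ‖D²v‖ ‖D²w‖ ‖D²φ‖`. -/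
theorem Gam_bound (Ω : Set (EuclideanSpace ℝ (Fin 2))) (hΩ : IsOpen Ω)
    (hbdd : Bornology.IsBounded Ω)
    (v w φ : EuclideanSpace ℝ (Fin 2) → ℝ)
    (hv : IsTest Ω v) (hw : IsTest Ω w) (hφ : IsTest Ω φ) :
    |Gam Ω v w φ| ≤ Real.sqrt (volume Ω).toReal / Real.pi ^ 2 *
      (Real.sqrt (∫ x in Ω, hess2 v x) * Real.sqrt (∫ x in Ω, hess2 w x) *
        Real.sqrt (∫ x in Ω, hess2 φ x)) := by
  rcases Set.eq_empty_or_nonempty Ω with h | h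
  · simp [Gam, h]
  · refine Gam_aux Ω hΩ hbdd v w φ hv hw hφ ?_
    exact ENNReal.toReal_pos (hΩ.measure_pos volume h).ne' hbdd.measure_lt_top.ne

end
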